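/- arXiv:2105.08394 — 2 statements merged into one kernel-verified Lean document; each statement's English description precedes it below -/
import Mathlib

section
/- Let $d \geq 2$, let $V_i = V_i^1 \oplus V_i^2$ for $i = 1,\dots,d$ be finite-dimensional vector spaces, and let $T \in V_1 \otimes \cdots \otimes V_d$. For $\alpha \in \{1,2\}^d$ let $T^\alpha$ denote the projection of $T$ to $V_1^{\alpha_1} \otimes \cdots \otimes V_d^{\alpha_d}$. Suppose $T^\alpha = 0$ unless $\alpha_d = 2$ or $\alpha = (1,1,\dots,1)$. Then $\sigma(T) \geq \sigma(T^{(1,\dots,1)}) + \sigma(T^{(2,\dots,2)})$. -/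
open scoped TensorProduct BigOperators

/-- Slice rank of a tensor in a tensor product of vector spaces. -/
noncomputable def tensorSliceRank (F : Type*) [Field F] {d : ℕ} (V : Fin d → Type*)
    [∀ i, AddCommGroup (V i)] [∀ i, Module F (V i)] (T : ⨂[F] i, V i) : ℕ :=
  sInf {r | ∃ S : Fin r → ⨂[F] i, V i,
    (∀ j, ∃ i : Fin d, ∃ u : V i,
      S j ∈ Submodule.span F {t | ∃ v : ∀ k, V k, v i = u ∧ t = PiTensorProduct.tprod F v}) ∧
    T = ∑ j, S j}

open PiTensorProduct in
theorem aux_slices {F : Type*} [Field F] {d : ℕ} (V : Fin d → Type*)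
    [∀ i, AddCommGroup (V i)] [∀ i, Module F (V i)] (T : ⨂[F] i, V i)
    {ι : Type*} [Fintype ι] (S : ι → ⨂[F] i, V i)
    (hS : ∀ j, ∃ i : Fin d, ∃ u : V i,
      S j ∈ Submodule.span F {t | ∃ v : ∀ k, V k, v i = u ∧ t = PiTensorProduct.tprod F v})
    (hT : T = ∑ j, S j) :
    ∃ S' : Fin (Fintype.card ι) → ⨂[F] i, V i,
    (∀ j, ∃ i : Fin d, ∃ u : V i,
      S' j ∈ Submodule.span F {t | ∃ v : ∀ k, V k, v i = u ∧ t = PiTensorProduct.tprod F v}) ∧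
    T = ∑ j, S' j := by
  refine ⟨fun j => S ((Fintype.equivFin ι).symm j), fun j => hS _, ?_⟩
  rw [hT]
  exact (Equiv.sum_comp (Fintype.equivFin ι).symm S).symm

theorem aux_map_zero {F : Type*} [Field F] {d : ℕ} (V Y : Fin d → Type*)
    [∀ i, AddCommGroup (V i)] [∀ i, Module F (V i)]
    [∀ i, AddCommGroup (Y i)] [∀ i, Module F (Y i)]
    (f : ∀ i, V i →ₗ[F] Y i) (i : Fin d) (h : f i = 0) (T : ⨂[F] i, V i) :
    PiTensorProduct.map f T = 0 := by
  have : PiTensorProduct.map f = 0 := by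
    apply PiTensorProduct.ext
    ext v
    simp only [LinearMap.compMultilinearMap_apply, PiTensorProduct.map_tprod,
      LinearMap.zero_apply]
    exact MultilinearMap.map_coord_zero _ i (by simp [h])
  rw [this]; rfl

theorem aux_tprod_sub {F : Type*} [Field F] {d : ℕ} (V : Fin d → Type*)
    [∀ i, AddCommGroup (V i)] [∀ i, Module F (V i)] (U : ∀ i, Submodule F (V i))
    (v w : ∀ i, V i) (h : ∀ i, v i - w i ∈ U i) :
    PiTensorProduct.tprod F v - PiTensorProduct.tprod F w ∈
      ⨆ i, Submodule.span F {t | ∃ v : ∀ k, V k, v i ∈ U i ∧ t = PiTensorProduct.tprod F v} := by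
  classical
  have key : ∀ s : Finset (Fin d), PiTensorProduct.tprod F v -
      PiTensorProduct.tprod F (s.piecewise w v) ∈
      ⨆ i, Submodule.span F {t | ∃ v : ∀ k, V k, v i ∈ U i ∧ t = PiTensorProduct.tprod F v} := by
    intro s
    induction s using Finset.induction_on with
    | empty => simp
    | insert i s his ih =>
      rw [Finset.piecewise_insert]
      have h1 : PiTensorProduct.tprod F (s.piecewise w v) -
          PiTensorProduct.tprod F (Function.update (s.piecewise w v) i (w i)) =
          PiTensorProduct.tprod F (Function.update (s.piecewise w v) i (v i - w i)) := by
        rw [MultilinearMap.map_update_sub]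
        congr 2
        have : v i = s.piecewise w v i := by simp [his]
        rw [this, Function.update_eq_self]
      have h2 := Submodule.add_mem _ ih (Submodule.mem_iSup_of_mem (p := fun i =>
        Submodule.span F {t | ∃ v : ∀ k, V k, v i ∈ U i ∧ t = PiTensorProduct.tprod F v}) i
        (Submodule.subset_span ⟨Function.update (s.piecewise w v) i (v i - w i),
          by simpa using h i, rfl⟩))
      rw [← h1] at h2
      simpa using h2
  simpa using key Finset.univ

theorem aux_pinv {F V Y : Type*} [Field F] [AddCommGroup V] [Module F V]
    [AddCommGroup Y] [Module F Y] (f : V →ₗ[F] Y) :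
    ∃ g : Y →ₗ[F] V, ∀ v, v - g (f v) ∈ LinearMap.ker f := by
  obtain ⟨s, hs⟩ := f.rangeRestrict.exists_rightInverse_of_surjective f.range_rangeRestrict
  obtain ⟨g, hg⟩ := LinearMap.exists_extend s
  refine ⟨g, fun v => ?_⟩
  have h1 : g (f v) = s (f.rangeRestrict v) := by
    rw [← hg]; rfl
  have h2 := congrArg Subtype.val (LinearMap.congr_fun hs (f.rangeRestrict v))
  simp at h2
  rw [LinearMap.mem_ker, map_sub, h1, h2, sub_self]

theorem aux_expand {F : Type*} [Field F] {d : ℕ} (V : Fin d → Type*)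
    [∀ i, AddCommGroup (V i)] [∀ i, Module F (V i)] (i : Fin d) (U : Submodule F (V i))
    [FiniteDimensional F U] (t : ⨂[F] i, V i)
    (ht : t ∈ Submodule.span F
      {t | ∃ v : ∀ k, V k, v i ∈ U ∧ t = PiTensorProduct.tprod F v}) :
    ∃ S : Fin (Module.finrank F U) → ⨂[F] i, V i,
      (∀ j, ∃ u : V i, S j ∈ Submodule.span F
        {t | ∃ v : ∀ k, V k, v i = u ∧ t = PiTensorProduct.tprod F v}) ∧ t = ∑ j, S j := by
  classical
  let b := Module.finBasis F U
  suffices h : ∃ S : Fin (Module.finrank F U) → ⨂[F] i, V i,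
      (∀ j, S j ∈ Submodule.span F
        {t | ∃ v : ∀ k, V k, v i = b j ∧ t = PiTensorProduct.tprod F v}) ∧ t = ∑ j, S j by
    obtain ⟨S, h1, h2⟩ := h
    exact ⟨S, fun j => ⟨_, h1 j⟩, h2⟩
  induction ht using Submodule.span_induction with
  | mem x hx =>
    obtain ⟨v, hv, rfl⟩ := hx
    refine ⟨fun j => b.repr ⟨v i, hv⟩ j •
      PiTensorProduct.tprod F (Function.update v i (b j : V i)), fun j => ?_, ?_⟩
    · exact Submodule.smul_mem _ _ (Submodule.subset_span ⟨_, by simp, rfl⟩)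
    · have h1 : v i = ∑ j, b.repr ⟨v i, hv⟩ j • (b j : V i) := by
        have := congrArg Subtype.val (b.sum_repr ⟨v i, hv⟩)
        rw [Submodule.coe_sum] at this
        exact this.symm
      have h2 : PiTensorProduct.tprod F v = PiTensorProduct.tprod F
          (Function.update v i (∑ j, b.repr ⟨v i, hv⟩ j • (b j : V i))) := by
        rw [← h1, Function.update_eq_self]
      rw [h2, MultilinearMap.map_update_sum]
      simp only [MultilinearMap.map_update_smul]
  | zero => exact ⟨0, fun j => Submodule.zero_mem _, by simp⟩
  | add x y _ _ hx hy =>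
    obtain ⟨S, h1, h2⟩ := hx
    obtain ⟨S', h1', h2'⟩ := hy
    exact ⟨fun j => S j + S' j, fun j => Submodule.add_mem _ (h1 j) (h1' j),
      by rw [h2, h2', Finset.sum_add_distrib]⟩
  | smul c x _ hx =>
    obtain ⟨S, h1, h2⟩ := hx
    exact ⟨fun j => c • S j, fun j => Submodule.smul_mem _ _ (h1 j),
      by rw [h2, Finset.smul_sum]⟩

theorem aux_upper {F : Type*} [Field F] {d : ℕ} (V Y : Fin d → Type*)
    [∀ i, AddCommGroup (V i)] [∀ i, Module F (V i)] [∀ i, FiniteDimensional F (V i)]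
    [∀ i, AddCommGroup (Y i)] [∀ i, Module F (Y i)]
    (f : ∀ i, V i →ₗ[F] Y i) (T : ⨂[F] i, V i) (hT : PiTensorProduct.map f T = 0) :
    tensorSliceRank F V T ≤ ∑ i, Module.finrank F (LinearMap.ker (f i)) := by
  classical
  choose g hg using fun i => aux_pinv (f i)
  have hmem : ∀ T : ⨂[F] i, V i,
      T - PiTensorProduct.map g (PiTensorProduct.map f T) ∈
      ⨆ i, Submodule.span F {t | ∃ v : ∀ k, V k, v i ∈ LinearMap.ker (f i) ∧
        t = PiTensorProduct.tprod F v} := by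
    intro T
    induction T using PiTensorProduct.induction_on with
    | smul_tprod r v =>
      simp only [map_smul, PiTensorProduct.map_tprod, ← smul_sub]
      exact Submodule.smul_mem _ _ (aux_tprod_sub V _ _ _ fun i => hg i (v i))
    | add x y hx hy =>
      have := Submodule.add_mem _ hx hy
      simp only [map_add]
      rwa [add_sub_add_comm]
  have h := hmem T
  rw [hT, map_zero, sub_zero, Submodule.mem_iSup_iff_exists_finsupp] at h
  obtain ⟨t, ht, hsum⟩ := h
  choose S hS1 hS2 using fun i => aux_expand V i _ (t i) (ht i)
  have := aux_slices V T
    (fun p : (Σ i : Fin d, Fin (Module.finrank F (LinearMap.ker (f i)))) => S p.1 p.2)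
    (fun p => ⟨p.1, hS1 p.1 p.2⟩) (by
      rw [Fintype.sum_sigma, ← hsum, Finsupp.sum_fintype _ _ (fun _ => rfl)]
      exact Finset.sum_congr rfl fun i _ => hS2 i)
  refine le_trans (Nat.sInf_le this) ?_
  simp

theorem aux_lower {F : Type*} [Field F] {d : ℕ} (hd : 0 < d) (V : Fin d → Type*)
    [∀ i, AddCommGroup (V i)] [∀ i, Module F (V i)] [∀ i, FiniteDimensional F (V i)]
    (T : ⨂[F] i, V i) : ∃ U : ∀ i, Submodule F (V i),
      PiTensorProduct.map (fun i => (U i).mkQ) T = 0 ∧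
      ∑ i, Module.finrank F (U i) ≤ tensorSliceRank F V T := by
  classical
  have hne : {r | ∃ S : Fin r → ⨂[F] i, V i,
    (∀ j, ∃ i : Fin d, ∃ u : V i,
      S j ∈ Submodule.span F {t | ∃ v : ∀ k, V k, v i = u ∧ t = PiTensorProduct.tprod F v}) ∧
    T = ∑ j, S j}.Nonempty := by
    induction T using PiTensorProduct.induction_on with
    | smul_tprod r v =>
      exact ⟨1, fun _ => r • PiTensorProduct.tprod F v, fun _ => ⟨⟨0, hd⟩, v ⟨0, hd⟩,
        Submodule.smul_mem _ _ (Submodule.subset_span ⟨v, rfl, rfl⟩)⟩, by simp⟩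
    | add x y hx hy =>
      obtain ⟨r, S, h1, h2⟩ := hx
      obtain ⟨r', S', h1', h2'⟩ := hy
      refine ⟨_, aux_slices V (x + y) (Sum.elim S S') ?_ ?_⟩
      · rintro (j | j)
        · exact h1 j
        · exact h1' j
      · simp [h2, h2']
  obtain ⟨S, h1, h2⟩ := Nat.sInf_mem hne
  choose k u hu using h1
  let U : ∀ i, Submodule F (V i) := fun i =>
    Submodule.span F (Set.range fun j : {j // k j = i} => j.2 ▸ u j.1)
  have hU : ∀ j, u j ∈ U (k j) := fun j => Submodule.subset_span ⟨⟨j, rfl⟩, rfl⟩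
  refine ⟨U, ?_, ?_⟩
  · rw [h2, map_sum]
    refine Finset.sum_eq_zero fun j _ => ?_
    have : Submodule.span F {t | ∃ v : ∀ i, V i, v (k j) = u j ∧ t = PiTensorProduct.tprod F v}
        ≤ LinearMap.ker (PiTensorProduct.map (fun i => (U i).mkQ)) := by
      rw [Submodule.span_le]
      rintro _ ⟨v, hv, rfl⟩
      rw [SetLike.mem_coe, LinearMap.mem_ker, PiTensorProduct.map_tprod]
      refine MultilinearMap.map_coord_zero _ (k j) ?_
      rw [hv]
      simpa using hU j
    exact this (hu j)
  · calc ∑ i, Module.finrank F (U i) ≤ ∑ i, Fintype.card {j // k j = i} :=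
          Finset.sum_le_sum fun i _ => finrank_range_le_card _
      _ = Fintype.card (Σ i, {j // k j = i}) := by rw [Fintype.card_sigma]
      _ = _ := by
        rw [Fintype.card_congr (Equiv.sigmaFiberEquiv k), Fintype.card_fin]
        rfl

theorem aux_dim {F V : Type*} [Field F] [AddCommGroup V] [Module F V] [FiniteDimensional F V]
    (U A B : Submodule F V) (h : IsCompl A B) :
    Module.finrank F (LinearMap.ker ((U ⊔ B).mkQ ∘ₗ A.subtype)) +
      Module.finrank F (LinearMap.ker (U.mkQ ∘ₗ B.subtype)) = Module.finrank F U := by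
  have e : ∀ X C : Submodule F V, Module.finrank F (LinearMap.ker (X.mkQ ∘ₗ C.subtype)) =
      Module.finrank F (X ⊓ C : Submodule F V) := by
    intro X C
    rw [LinearMap.ker_comp, Submodule.ker_mkQ, inf_comm]
    rw [← Submodule.map_comap_subtype]
    exact (Submodule.finrank_map_subtype_eq _ _).symm
  rw [e, e]
  have h1 := Submodule.finrank_sup_add_finrank_inf_eq U B
  have h2 := Submodule.finrank_sup_add_finrank_inf_eq ((U ⊔ B) ⊓ A) B
  have h3 : (U ⊔ B) ⊓ A ⊔ B = U ⊔ B := by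
    rw [inf_sup_assoc_of_le A (le_sup_right : B ≤ U ⊔ B), h.sup_eq_top, inf_top_eq]
  have h4 : (U ⊔ B) ⊓ A ⊓ B = ⊥ := by
    rw [inf_assoc, h.inf_eq_bot, inf_bot_eq]
  rw [h3, h4, finrank_bot] at h2
  omega

theorem aux_dim2 {F V : Type*} [Field F] [AddCommGroup V] [Module F V] [FiniteDimensional F V]
    (U A B X Y : Submodule F V) (h : IsCompl A B) (hX : X = U ⊔ B) (hY : Y = U) :
    Module.finrank F (LinearMap.ker (X.mkQ ∘ₗ A.subtype)) +
      Module.finrank F (LinearMap.ker (Y.mkQ ∘ₗ B.subtype)) = Module.finrank F U := by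
  subst hX hY
  exact aux_dim _ A B h

theorem aux_comp {F : Type*} [Field F] {d : ℕ} (V : Fin d → Type*)
    [∀ i, AddCommGroup (V i)] [∀ i, Module F (V i)]
    (W : ∀ i : Fin d, Fin 2 → Submodule F (V i))
    (T : ⨂[F] i, V i)
    (Tc : ∀ α : Fin d → Fin 2, ⨂[F] i, (W i (α i)))
    (hdecomp : T = ∑ α : Fin d → Fin 2,
      PiTensorProduct.map (fun i => (W i (α i)).subtype) (Tc α))
    (U X : ∀ i, Submodule F (V i)) (hUX : ∀ i, U i ≤ X i)
    (hU : PiTensorProduct.map (fun i => (U i).mkQ) T = 0) (β : Fin d → Fin 2)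
    (h : ∀ α, α ≠ β → Tc α = 0 ∨ ∃ i, W i (α i) ≤ X i) :
    PiTensorProduct.map (fun i => (X i).mkQ ∘ₗ (W i (β i)).subtype) (Tc β) = 0 := by
  have hX : PiTensorProduct.map (fun i => (X i).mkQ) T = 0 := by
    have : (fun i => (X i).mkQ) = fun i => (Submodule.factor (hUX i)) ∘ₗ (U i).mkQ := by
      funext i; ext v; simp
    rw [this, PiTensorProduct.map_comp, LinearMap.comp_apply, hU, map_zero]
  rw [hdecomp, map_sum, Finset.sum_eq_single β] at hX
  · rw [PiTensorProduct.map_comp]; exact hX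
  · intro α _ hα
    rcases h α hα with h | ⟨i, hi⟩
    · rw [h, map_zero, map_zero]
    · rw [← LinearMap.comp_apply, ← PiTensorProduct.map_comp]
      refine aux_map_zero _ _ _ i ?_ _
      ext v
      simpa using hi v.2
  · simp

/-- Gowers' Theorem 3: if each component `Tᶜ α` of `T` with respect to the decompositions
`Vᵢ = Vᵢ¹ ⊕ Vᵢ²` vanishes unless the last entry of `α` is `2` (here `1`, indexing by `Fin 2`)
or `α` is constantly `1` (here `0`), then `σ(T) ≥ σ(T^{1⋯1}) + σ(T^{2⋯2})`. -/
theorem sliceRank_ge_of_last_or_diag {F : Type*} [Field F] {d : ℕ} (hd : 2 ≤ d)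
    (V : Fin d → Type*)
    [∀ i, AddCommGroup (V i)] [∀ i, Module F (V i)] [∀ i, FiniteDimensional F (V i)]
    (W : ∀ i : Fin d, Fin 2 → Submodule F (V i))
    (hW : ∀ i, DirectSum.IsInternal (W i))
    (T : ⨂[F] i, V i)
    (Tc : ∀ α : Fin d → Fin 2, ⨂[F] i, (W i (α i)))
    (hdecomp : T = ∑ α : Fin d → Fin 2,
      PiTensorProduct.map (fun i => (W i (α i)).subtype) (Tc α))
    (hzero : ∀ α : Fin d → Fin 2,
      ¬(α ⟨d - 1, by omega⟩ = 1 ∨ α = (fun _ => 0)) → Tc α = 0) :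
    tensorSliceRank F V T ≥
      tensorSliceRank F (fun i => (W i 0)) (Tc fun _ => 0) +
        tensorSliceRank F (fun i => (W i 1)) (Tc fun _ => 1) := by
  classical
  obtain ⟨U, hU, hle⟩ := aux_lower (by omega) V T
  refine le_trans ?_ hle
  set l : Fin d := ⟨d - 1, by omega⟩ with hl
  have hc : ∀ i, IsCompl (W i 0) (W i 1) := fun i =>
    (hW i).isCompl (by decide) (by ext x; fin_cases x <;> simp)
  have h0 := aux_comp V W T Tc hdecomp U (fun i => if i = l then U i ⊔ W i 1 else U i)
    (fun i => by split_ifs; exacts [le_sup_left, le_rfl]) hU (fun _ => 0) (by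
      intro α hα
      by_cases h : α l = 1
      · exact Or.inr ⟨l, by simp [h]⟩
      · exact Or.inl (hzero α (by tauto)))
  have h1 := aux_comp V W T Tc hdecomp U (fun i => if i = l then U i else U i ⊔ W i 0)
    (fun i => by split_ifs; exacts [le_rfl, le_sup_left]) hU (fun _ => 1) (by
      intro α hα
      by_cases h : ∃ i, i ≠ l ∧ α i = 0
      · obtain ⟨i, hi, h⟩ := h
        exact Or.inr ⟨i, by simp [h, hi]⟩
      · push Not at h
        refine Or.inl (hzero α ?_)
        rintro (h2 | h2)
        · apply hα
          funext i
          by_cases hi : i = l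
          · rw [hi]; exact h2
          · have := h i hi
            omega
        · refine h ⟨0, by omega⟩ ?_ (by rw [h2])
          rw [hl, Ne, Fin.mk.injEq]
          omega)
  have k0 := aux_upper (fun i => (W i 0)) _ _ _ h0
  have k1 := aux_upper (fun i => (W i 1)) _ _ _ h1
  refine le_trans (Nat.add_le_add k0 k1) ?_
  rw [← Finset.sum_add_distrib]
  refine Finset.sum_le_sum fun i _ => ?_
  by_cases hi : i = l
  · exact (aux_dim2 (U i) _ _ _ _ (hc i) (if_pos hi) (if_pos hi)).le
  · rw [add_comm]
    exact (aux_dim2 (U i) _ _ _ _ (hc i).symm (if_neg hi) (if_neg hi)).le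
end

section
/- For any $d$-tensors $T_1, \dots, T_m$ over a field (each on its own product of finite index sets, $d \geq 2$), the slice rank of the direct sum $T_1 \oplus \cdots \oplus T_m$ equals $\sigma(T_1) + \cdots + \sigma(T_m)$. -/
open scoped BigOperators

/-- A tensor `T : (∀ i, X i) → F` has slice rank at most one. -/
def IsSliceOne {F : Type*} [Field F] {d : ℕ} {X : Fin d → Type*}
    (T : (∀ i, X i) → F) : Prop :=
  ∃ (i : Fin d) (u : X i → F) (v : (∀ i, X i) → F),
    (∀ x y : ∀ i, X i, (∀ j, j ≠ i → x j = y j) → v x = v y) ∧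
    ∀ x, T x = u (x i) * v x

/-- Slice rank of a function tensor: least number of slice-rank-one summands. -/
noncomputable def sliceRank {F : Type*} [Field F] {d : ℕ} {X : Fin d → Type*}
    (T : (∀ i, X i) → F) : ℕ :=
  sInf {r | ∃ S : Fin r → ((∀ i, X i) → F),
    (∀ k, IsSliceOne (S k)) ∧ ∀ x, T x = ∑ k, S k x}

/-- The direct sum of a family of `d`-tensors `T j : (∀ i, X j i) → F`, as a tensor on
`∀ i, Σ j, X j i`: it agrees with `T j` on the `j`-th diagonal block and is `0` off the
diagonal blocks. -/
noncomputable def directSumTensor {F : Type*} [Field F] {d m : ℕ}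
    {X : Fin m → Fin d → Type*} (T : ∀ j, (∀ i, X j i) → F) :
    (∀ i, Σ j, X j i) → F := fun x =>
  ∑ j : Fin m, if h : ∀ i, (x i).1 = j then
      T j (fun i => cast (congrArg (fun j' => X j' i) (h i)) (x i).2)
    else 0

namespace SliceAux

open Module

/-- multilinear extension -/
noncomputable def ext {F : Type*} [Field F] {d : ℕ} {X : Fin d → Type*} [∀ i, Fintype (X i)]
    (T : (∀ i, X i) → F) : MultilinearMap F (fun i => X i → F) F :=
  ∑ x : (∀ i, X i), T x • (MultilinearMap.mkPiAlgebra F (Fin d) F).compLinearMap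
    (fun i => LinearMap.proj (x i))

lemma ext_apply {F : Type*} [Field F] {d : ℕ} {X : Fin d → Type*} [∀ i, Fintype (X i)]
    (T : (∀ i, X i) → F) (f : ∀ i, X i → F) :
    ext T f = ∑ x : (∀ i, X i), T x * ∏ i, f i (x i) := by
  simp [ext]

/-- `T` is a sum of `r` slices -/
def HasS {F : Type*} [Field F] {d : ℕ} {X : Fin d → Type*}
    (T : (∀ i, X i) → F) (r : ℕ) : Prop :=
  ∃ S : Fin r → ((∀ i, X i) → F), (∀ k, IsSliceOne (S k)) ∧ ∀ x, T x = ∑ k, S k x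

lemma HasS.add {F : Type*} [Field F] {d : ℕ} {X : Fin d → Type*}
    {T U V : (∀ i, X i) → F} {r s : ℕ} (hT : HasS T r) (hU : HasS U s)
    (hV : ∀ x, V x = T x + U x) : HasS V (r + s) := by
  obtain ⟨S, hS, hS'⟩ := hT
  obtain ⟨R, hR, hR'⟩ := hU
  refine ⟨Fin.append S R, fun k => ?_, fun x => ?_⟩
  · induction k using Fin.addCases with
    | left i => simpa using hS i
    | right i => simpa using hR i
  · rw [hV, hS', hR', Fin.sum_univ_add]
    simp

open Classical in
lemma slice_ext {F : Type*} [Field F] {d : ℕ} {X : Fin d → Type*} [∀ i, Fintype (X i)]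
    (i : Fin d) (u : X i → F) (v : (∀ i, X i) → F)
    (hv : ∀ x y : ∀ i, X i, (∀ j, j ≠ i → x j = y j) → v x = v y)
    (f : ∀ i, X i → F) (hf : ∑ y, u y * f i y = 0) :
    ∑ x : (∀ i, X i), (u (x i) * v x) * ∏ j, f j (x j) = 0 := by
  rw [← Equiv.sum_comp (Equiv.piSplitAt i X).symm, Fintype.sum_prod_type_right]
  refine Finset.sum_eq_zero fun z _ => ?_
  by_cases hne : Nonempty (X i)
  swap
  · rw [not_nonempty_iff] at hne
    simp
  obtain ⟨y0⟩ := hne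
  have : ∀ y : X i, (u ((Equiv.piSplitAt i X).symm (y, z) i) * v ((Equiv.piSplitAt i X).symm (y, z)))
      * ∏ j, f j ((Equiv.piSplitAt i X).symm (y, z) j) =
      (u y * f i y) * (v ((Equiv.piSplitAt i X).symm (y0, z)) * ∏ j : {j // j ≠ i}, f j (z j)) := by
    intro y
    have h1 : v ((Equiv.piSplitAt i X).symm (y, z)) = v ((Equiv.piSplitAt i X).symm (y0, z)) := by
      apply hv
      intro j hj
      simp [Equiv.piSplitAt, hj]
    have h2 : ∏ j, f j ((Equiv.piSplitAt i X).symm (y, z) j) =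
        f i y * ∏ j : {j // j ≠ i}, f j (z j) := by
      rw [Fintype.prod_eq_mul_prod_subtype_ne _ i]
      congr 1
      · simp [Equiv.piSplitAt]
      · refine Finset.prod_congr rfl fun j _ => ?_
        simp [Equiv.piSplitAt, j.2]
    rw [h1, h2]
    simp only [Equiv.piSplitAt, Equiv.coe_fn_symm_mk, dite_true]
    ring
  rw [Finset.sum_congr rfl (fun y _ => this y), ← Finset.sum_mul, hf, zero_mul]

/-- subspace certificate -/
def Cert {F : Type*} [Field F] {d : ℕ} {X : Fin d → Type*} [∀ i, Fintype (X i)]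
    (T : (∀ i, X i) → F) (r : ℕ) : Prop :=
  ∃ A : ∀ i, Submodule F (X i → F), (∀ f : ∀ i, X i → F, (∀ i, f i ∈ A i) → ext T f = 0) ∧
    ∑ i, Fintype.card (X i) ≤ r + ∑ i, finrank F (A i)

lemma cert_of_hasS {F : Type*} [Field F] {d : ℕ} {X : Fin d → Type*} [∀ i, Fintype (X i)]
    {T : (∀ i, X i) → F} {r : ℕ} (h : HasS T r) : Cert T r := by
  classical
  obtain ⟨S, hS, hT⟩ := h
  choose i u v hv hS using hS
  let L : ∀ j, (X j → F) →ₗ[F] ({k // i k = j} → F) := fun j =>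
    LinearMap.pi fun k => ∑ y : X j, u k.1 (cast (congrArg X k.2.symm) y) • LinearMap.proj y
  refine ⟨fun j => LinearMap.ker (L j), fun f hf => ?_, ?_⟩
  · rw [ext_apply]
    simp_rw [hT, Finset.sum_mul]
    rw [Finset.sum_comm]
    refine Finset.sum_eq_zero fun k _ => ?_
    simp_rw [hS]
    apply slice_ext (i k) (u k) (v k) (hv k)
    have := congrFun (LinearMap.mem_ker.1 (hf (i k))) ⟨k, rfl⟩
    simpa [L] using this
  · have h1 : ∀ j, Fintype.card (X j) ≤ Fintype.card {k // i k = j}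
        + finrank F (LinearMap.ker (L j)) := by
      intro j
      have e := LinearMap.finrank_range_add_finrank_ker (L j)
      have e2 := Submodule.finrank_le (LinearMap.range (L j))
      simp only [Module.finrank_fintype_fun_eq_card] at e e2
      omega
    have h2 : ∑ j, Fintype.card {k // i k = j} = r := by
      rw [← Fintype.card_sigma, Fintype.card_congr (Equiv.sigmaFiberEquiv i), Fintype.card_fin]
    calc _ ≤ _ := Finset.sum_le_sum fun j _ => h1 j
      _ = _ := by rw [Finset.sum_add_distrib, h2]

lemma HasS.mono_zero {F : Type*} [Field F] {d : ℕ} {X : Fin d → Type*}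
    {T : (∀ i, X i) → F} (h : ∀ x, T x = 0) : HasS T 0 :=
  ⟨fun _ _ => 0, fun k => k.elim0, by simpa using h⟩

lemma hasS_of_cert {F : Type*} [Field F] {d : ℕ} {X : Fin d → Type*} [∀ i, Fintype (X i)]
    {T : (∀ i, X i) → F} {r : ℕ} (h : Cert T r) : ∃ r' ≤ r, HasS T r' := by
  classical
  obtain ⟨A, hA, hr⟩ := h
  choose W hW using fun i => Submodule.exists_isCompl (A i)
  let Q : ∀ i, (X i → F) →ₗ[F] (W i) := fun i => Submodule.projectionOnto (W i) (A i) (hW i).symm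
  let b : ∀ i, Basis (Fin (finrank F (W i))) F (W i) := fun i => finBasis F (W i)
  let e : ∀ i, X i → (X i → F) := fun i y => Pi.single y 1
  have hQ : ∀ i f, f - (Q i f : X i → F) ∈ A i := by
    intro i f
    rw [← Submodule.ker_projectionOnto (hW i).symm, LinearMap.mem_ker, map_sub]
    rw [sub_eq_zero]
    exact (Submodule.projectionOnto_apply_left (hW i).symm (Q i f)).symm
  let g : Finset (Fin d) → (∀ i, X i) → ∀ i, X i → F := fun s x i =>
    if i ∈ s then e i (x i) - (Q i (e i (x i)) : X i → F) else e i (x i)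
  have key : ∀ s : Finset (Fin d),
      HasS (fun x => ext T (g ∅ x) - ext T (g s x)) (∑ i ∈ s, finrank F (W i)) := by
    intro s
    induction s using Finset.induction_on with
    | empty => exact HasS.mono_zero (by simp)
    | insert i s hi ih =>
      rw [Finset.sum_insert hi, add_comm]
      refine ih.add (U := fun x => ext T (Function.update (g s x) i (Q i (e i (x i)) : X i → F)))
        ⟨fun k x => (b i).repr (Q i (e i (x i))) k *
          ext T (Function.update (g s x) i (b i k : X i → F)), fun k => ?_, fun x => ?_⟩ fun x => ?_
      · refine ⟨i, fun y => (b i).repr (Q i (e i y)) k,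
          fun x => ext T (Function.update (g s x) i (b i k : X i → F)), ?_, fun x => rfl⟩
        intro x y hxy
        dsimp only
        congr 1
        ext1 j
        by_cases hj : j = i
        · subst hj; simp
        · simp only [Function.update_of_ne hj, g, hxy j hj]
      · have : (Q i (e i (x i)) : X i → F) =
            ∑ k, (b i).repr (Q i (e i (x i))) k • (b i k : X i → F) := by
          conv_lhs => rw [← (b i).sum_repr (Q i (e i (x i)))]
          simp only [Submodule.coe_sum, Submodule.coe_smul]
        dsimp only
        conv_lhs => rw [this]
        rw [MultilinearMap.map_update_sum]
        simp [MultilinearMap.map_update_smul]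
      · have h1 : g s x = Function.update (g s x) i (e i (x i)) := by
          ext1 j
          by_cases hj : j = i
          · subst hj; simp [g, hi]
          · simp [hj]
        have h2 : g (insert i s) x =
            Function.update (g s x) i (e i (x i) - (Q i (e i (x i)) : X i → F)) := by
          ext1 j
          by_cases hj : j = i
          · subst hj; simp [g]
          · simp [hj, g]
        rw [h2, MultilinearMap.map_update_sub, ← h1]
        ring
  refine ⟨∑ i, finrank F (W i), ?_, ?_⟩
  · have : ∀ i, finrank F (A i) + finrank F (W i) = Fintype.card (X i) := by
      intro i
      rw [Submodule.finrank_add_eq_of_isCompl (hW i), Module.finrank_fintype_fun_eq_card]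
    simp_rw [← this, Finset.sum_add_distrib] at hr
    omega
  · convert key Finset.univ using 2 with x
    rw [hA (g Finset.univ x) (fun i => by simpa [g] using hQ i _), sub_zero, ext_apply]
    rw [Finset.sum_eq_single x]
    · simp [g, e]
    · intro y _ hy
      obtain ⟨i, hi⟩ := Function.ne_iff.1 hy
      rw [Finset.prod_eq_zero (Finset.mem_univ i), mul_zero]
      simp [g, e, hi]
    · simp

lemma cert_sliceRank {F : Type*} [Field F] {d : ℕ} (hd : 2 ≤ d) {X : Fin d → Type*}
    [∀ i, Fintype (X i)] (T : (∀ i, X i) → F) : Cert T (sliceRank T) := by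
  apply cert_of_hasS
  refine Nat.sInf_mem (s := {r | HasS T r}) ?_
  obtain ⟨r, -, hr⟩ := hasS_of_cert (T := T) (r := ∑ i, Fintype.card (X i))
    ⟨fun _ => ⊥, fun f hf => (ext T).map_coord_zero ⟨0, by omega⟩ (by simpa using hf _), by simp⟩
  exact ⟨r, hr⟩

lemma sliceRank_le_of_cert {F : Type*} [Field F] {d : ℕ} {X : Fin d → Type*}
    [∀ i, Fintype (X i)] {T : (∀ i, X i) → F} {r : ℕ} (h : Cert T r) : sliceRank T ≤ r := by
  obtain ⟨r', h', hr⟩ := hasS_of_cert h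
  exact (Nat.sInf_le hr).trans h'

/-- restriction to block `j` -/
def res (F : Type*) [Field F] {m : ℕ} (Y : Fin m → Type*) (j : Fin m) :
    ((Σ j, Y j) → F) →ₗ[F] (Y j → F) := LinearMap.funLeft F F (fun y => ⟨j, y⟩)

lemma res_apply (F : Type*) [Field F] {m : ℕ} (Y : Fin m → Type*) (j : Fin m)
    (f : (Σ j, Y j) → F) (y : Y j) : res F Y j f y = f ⟨j, y⟩ := rfl

lemma ext_directSum {F : Type*} [Field F] {d m : ℕ} (hd : 2 ≤ d)
    (X : Fin m → Fin d → Type*) [∀ j i, Fintype (X j i)]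
    (T : ∀ j, (∀ i, X j i) → F) (f : ∀ i, (Σ j, X j i) → F) :
    ext (directSumTensor T) f = ∑ j, ext (T j) (fun i => res F (fun j => X j i) j (f i)) := by
  rw [ext_apply]
  simp_rw [directSumTensor, Finset.sum_mul]
  rw [Finset.sum_comm]
  refine Finset.sum_congr rfl fun j _ => ?_
  rw [ext_apply]
  symm
  refine Finset.sum_of_injOn (fun y i => ⟨j, y i⟩) ?_ (by simp) ?_ ?_
  · intro y _ z _ h
    ext1 i
    have := congrFun h i
    simpa using this
  · intro x _ hx
    rw [dif_neg, zero_mul]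
    intro h
    apply hx
    refine ⟨fun i => cast (congrArg (fun j' => X j' i) (h i)) (x i).2, by simp, ?_⟩
    ext1 i
    have aux : ∀ (z : Σ j, X j i) (h : z.1 = j),
        (⟨j, cast (congrArg (fun j' => X j' i) h) z.2⟩ : Σ j, X j i) = z := by
      rintro ⟨k, z⟩ rfl
      rfl
    exact aux (x i) (h i)
  · intro y _
    simp [res_apply]

/-- filtration -/
def filt {F : Type*} [Field F] {m : ℕ} {Y : Fin m → Type*} (ρ : Fin m ≃ Fin m)
    (A : Submodule F ((Σ j, Y j) → F)) (n : ℕ) : Submodule F ((Σ j, Y j) → F) where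
  carrier := {f | f ∈ A ∧ ∀ k y, n ≤ (ρ k : ℕ) → f ⟨k, y⟩ = 0}
  add_mem' := by
    rintro a b ⟨ha, ha'⟩ ⟨hb, hb'⟩
    exact ⟨A.add_mem ha hb, fun k y h => by simp [ha' k y h, hb' k y h]⟩
  zero_mem' := ⟨A.zero_mem, by simp⟩
  smul_mem' := by
    rintro c a ⟨ha, ha'⟩
    exact ⟨A.smul_mem c ha, fun k y h => by simp [ha' k y h]⟩

lemma finrank_filt {F : Type*} [Field F] {m : ℕ} {Y : Fin m → Type*} [∀ j, Fintype (Y j)]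
    (ρ : Fin m ≃ Fin m) (A : Submodule F ((Σ j, Y j) → F)) :
    finrank F A ≤ ∑ j, finrank F ((filt ρ A (ρ j + 1)).map (res F Y j)) := by
  have step : ∀ n : Fin m, finrank F (filt ρ A (n + 1)) ≤
      finrank F (filt ρ A n) + finrank F ((filt ρ A (n + 1)).map (res F Y (ρ.symm n))) := by
    intro n
    have e := LinearMap.finrank_range_add_finrank_ker
      ((res F Y (ρ.symm n)).domRestrict (filt ρ A (n + 1)))
    rw [LinearMap.range_domRestrict] at e
    have : finrank F (LinearMap.ker ((res F Y (ρ.symm n)).domRestrict (filt ρ A (n + 1)))) ≤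
        finrank F (filt ρ A n) := by
      let K := LinearMap.ker ((res F Y (ρ.symm n)).domRestrict (filt ρ A (n + 1)))
      refine LinearMap.finrank_le_finrank_of_injective
        (f := ((filt ρ A (n + 1)).subtype ∘ₗ K.subtype).codRestrict (filt ρ A n) ?_) ?_
      · rintro ⟨⟨f, hf, hf'⟩, hk⟩
        refine ⟨hf, fun k y hk' => ?_⟩
        rcases Nat.lt_or_eq_of_le hk' with h | h
        · exact hf' k y h
        · have hkn : k = ρ.symm n := by
            rw [Equiv.eq_symm_apply]; exact Fin.ext h.symm
          subst hkn
          exact congrFun (LinearMap.mem_ker.1 hk) y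
      · intro a b h
        have h' := congrArg Subtype.val h
        exact Subtype.ext (Subtype.ext h')
    omega
  have all : ∀ n (hn : n ≤ m), finrank F (filt ρ A n) ≤
      ∑ k : Fin n, finrank F ((filt ρ A (k + 1)).map (res F Y (ρ.symm (Fin.castLE hn k)))) := by
    intro n
    induction n with
    | zero =>
      intro _
      have : filt ρ A 0 = ⊥ := by
        rw [eq_bot_iff]
        rintro f ⟨-, hf⟩
        rw [Submodule.mem_bot]
        ext ⟨k, y⟩
        exact hf k y (Nat.zero_le _)
      simp [this]
    | succ n ih =>
      intro hn
      rw [Fin.sum_univ_castSucc]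
      exact (step ⟨n, hn⟩).trans (Nat.add_le_add_right (ih (by omega)) _)
  have h1 : filt ρ A m = A := by
    ext f
    exact ⟨fun h => h.1, fun h => ⟨h, fun k y hk => absurd (ρ k).2 (by omega)⟩⟩
  have h2 := all m le_rfl
  rw [h1] at h2
  refine h2.trans (le_of_eq ?_)
  rw [← Equiv.sum_comp ρ]
  refine Finset.sum_congr rfl fun x _ => ?_
  have : ρ.symm (Fin.castLE le_rfl (ρ x)) = x := by simp
  rw [this]

end SliceAux

open SliceAux Module in
theorem sliceRank_directSumTensor {F : Type*} [Field F] {d m : ℕ} (hd : 2 ≤ d)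
    (X : Fin m → Fin d → Type*) [∀ j i, Fintype (X j i)]
    (T : ∀ j, (∀ i, X j i) → F) :
    sliceRank (directSumTensor T) = ∑ j, sliceRank (T j) := by
  apply le_antisymm
  · apply sliceRank_le_of_cert
    choose A hA hr using fun j => cert_sliceRank hd (T j)
    refine ⟨fun i => ⨅ j, (A j i).comap (res F (fun j => X j i) j), fun f hf => ?_, ?_⟩
    · rw [ext_directSum hd]
      refine Finset.sum_eq_zero fun j _ => hA j _ fun i => ?_
      have := hf i
      rw [Submodule.mem_iInf] at this
      exact this j
    · have h1 : ∀ i, ∑ j, finrank F (A j i) ≤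
          finrank F (⨅ j, (A j i).comap (res F (fun j => X j i) j) : Submodule F _) := by
        intro i
        rw [← Module.finrank_pi_fintype F]
        let L : (∀ j, A j i) →ₗ[F] ((Σ j, X j i) → F) :=
          { toFun := fun a p => (a p.1 : X p.1 i → F) p.2
            map_add' := fun a b => rfl
            map_smul' := fun c a => rfl }
        refine LinearMap.finrank_le_finrank_of_injective (f := L.codRestrict _ ?_) ?_
        · intro a
          rw [Submodule.mem_iInf]
          intro j
          exact (a j).2
        · intro a b h
          have h' : L a = L b := congrArg Subtype.val h
          ext j y
          exact congrFun h' ⟨j, y⟩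
      calc ∑ i, Fintype.card (Σ j, X j i) = ∑ j, ∑ i, Fintype.card (X j i) := by
            rw [Finset.sum_comm]; simp
        _ ≤ ∑ j, (sliceRank (T j) + ∑ i, finrank F (A j i)) :=
            Finset.sum_le_sum fun j _ => hr j
        _ = ∑ j, sliceRank (T j) + ∑ i, ∑ j, finrank F (A j i) := by
            rw [Finset.sum_add_distrib, Finset.sum_comm (γ := Fin d)]
        _ ≤ _ := Nat.add_le_add_left (Finset.sum_le_sum fun i _ => h1 i) _
  · obtain ⟨A, hA, hr⟩ := cert_sliceRank hd (directSumTensor T)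
    let ρ : Fin d → (Fin m ≃ Fin m) := fun i => if i.1 = 0 then Equiv.refl _ else Fin.revPerm
    let B : ∀ (j : Fin m) (i : Fin d), Submodule F (X j i → F) := fun j i =>
      (filt (ρ i) (A i) (ρ i j + 1)).map (res F (fun j => X j i) j)
    have hle : ∀ j i, finrank F (B j i) ≤ Fintype.card (X j i) := fun j i => by
      have := Submodule.finrank_le (B j i)
      rwa [Module.finrank_fintype_fun_eq_card] at this
    have hc : ∀ j, sliceRank (T j) ≤ ∑ i, (Fintype.card (X j i) - finrank F (B j i)) := by
      intro j
      apply sliceRank_le_of_cert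
      refine ⟨B j, fun f hf => ?_, ?_⟩
      · choose a ha haf using hf
        have h0 := hA a fun i => (ha i).1
        rw [ext_directSum hd, Finset.sum_eq_single j] at h0
        · simpa only [haf] using h0
        · intro k _ hk
          rcases lt_or_gt_of_ne hk with h | h
          · apply MultilinearMap.map_coord_zero _ (⟨1, by omega⟩ : Fin d)
            ext y
            refine (ha ⟨1, by omega⟩).2 k y ?_
            simp [ρ]
            omega
          · apply MultilinearMap.map_coord_zero _ (⟨0, by omega⟩ : Fin d)
            ext y
            refine (ha ⟨0, by omega⟩).2 k y ?_
            simp [ρ]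
            omega
        · simp
      · rw [← Finset.sum_add_distrib]
        exact Finset.sum_le_sum fun i _ => by have := hle j i; omega
    have hf : ∀ i, finrank F (A i) ≤ ∑ j, finrank F (B j i) := fun i => finrank_filt (ρ i) (A i)
    have e1 : ∑ j, ∑ i, (Fintype.card (X j i) - finrank F (B j i)) +
        ∑ i, ∑ j, finrank F (B j i) = ∑ i, Fintype.card (Σ j, X j i) := by
      rw [Finset.sum_comm (γ := Fin d), ← Finset.sum_add_distrib]
      simp only [Fintype.card_sigma]
      rw [Finset.sum_comm]
      refine Finset.sum_congr rfl fun j _ => ?_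
      rw [← Finset.sum_add_distrib]
      exact Finset.sum_congr rfl fun i _ => Nat.sub_add_cancel (hle j i)
    have hr' : ∑ i, Fintype.card (Σ j, X j i) ≤
      sliceRank (directSumTensor T) + ∑ i, finrank F (A i) := hr
    have e2 : ∑ i, finrank F (A i) ≤ ∑ i, ∑ j, finrank F (B j i) :=
      Finset.sum_le_sum fun i (_ : i ∈ Finset.univ) => hf i
    have e3 := Finset.sum_le_sum fun j (_ : j ∈ Finset.univ) => hc j
    omega
end
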